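/- For every n ≥ 1 and every vector a ∈ ℂ^n, the Toeplitz-plus-Hankel matrix of a is diagonalized by the DCT matrix: C_n · tph(a) · C_nᵀ = diag(d), where d = M_n a ∈ ℂ^n. -/

import Mathlib

open Matrix

noncomputable section

/-- The discrete cosine transform (DCT) matrix `C_n`. -/
def dctMatrix (n : ℕ) : Matrix (Fin n) (Fin n) ℝ :=
  Matrix.of fun i j =>
    Real.sqrt ((2 - if (i : ℕ) = 0 then (1 : ℝ) else 0) / n) *
      Real.cos ((i : ℕ) * (2 * (j : ℕ) + 1) * Real.pi / (2 * n))

/-- Toeplitz-plus-Hankel selector: entry `(i,j)` (0-based) of `T + H`, where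
`T_{i,j} = B_{|i−j|}` and (0-based) `H_{i,j} = B_{i+j+1}` if `i+j+2 ≤ m`,
`H_{i,j} = 0` if `i+j+2 = m+1`, and `H_{i,j} = B_{2m−1−(i+j)}` if `i+j+2 ≥ m+2`. -/
def thSelect {m : ℕ} {β : Type*} [AddCommMonoid β] (B : Fin m → β) (i j : Fin m) : β :=
  B ⟨(((i : ℕ) : ℤ) - ((j : ℕ) : ℤ)).natAbs, by
      have hi := i.isLt; have hj := j.isLt; omega⟩ +
  (if h1 : (i : ℕ) + (j : ℕ) + 2 ≤ m then
      B ⟨(i : ℕ) + (j : ℕ) + 1, by omega⟩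
   else if h2 : (i : ℕ) + (j : ℕ) + 2 = m + 1 then 0
   else
      B ⟨2 * m - 1 - ((i : ℕ) + (j : ℕ)), by
        have hi := i.isLt; have hj := j.isLt; omega⟩)

/-- The Toeplitz-plus-Hankel matrix `tph(a)` of a vector `a ∈ ℂ^n`. -/
def tph {n : ℕ} (a : Fin n → ℂ) : Matrix (Fin n) (Fin n) ℂ :=
  Matrix.of fun i j => thSelect a i j

/-- `W_n`: the diagonal matrix whose diagonal is the first column of `C_n`. -/
def Wmat (n : ℕ) : Matrix (Fin n) (Fin n) ℝ :=
  Matrix.diagonal fun i => dctMatrix n i ⟨0, i.pos⟩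

/-- `Z_n`: the upshift matrix, `(Z_n)_{i,i+1} = 1` and all other entries `0`. -/
def Zmat (n : ℕ) : Matrix (Fin n) (Fin n) ℝ :=
  Matrix.of fun i j => if (i : ℕ) + 1 = (j : ℕ) then 1 else 0

/-- `M_n = W_n⁻¹ C_n (I_n + Z_n)`. -/
def Mmat (n : ℕ) : Matrix (Fin n) (Fin n) ℝ :=
  (Wmat n)⁻¹ * dctMatrix n * (1 + Zmat n)

/-!
Extend `a` to an even function on `ZMod (2 * n)`. Entry `(i, j)` of `tph a` is the value of this
extension at `i - j` plus its value at `i + j + 1`, so `tph a` is convolution by the extension,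
restricted to functions invariant under the reflection `x ↦ -1 - x`. Each row of `C_n` is such a
function, and the product-to-sum formula makes it an eigenvector of every even convolution. The
first column of `tph a` is `(I_n + Z_n) a`; comparing first columns in `C_n (tph a) = Λ C_n`
therefore identifies the eigenvalues as `W_n⁻¹ C_n (I_n + Z_n) a = M_n a`. Orthogonality of `C_n`
follows from the recurrence `c (x + 1) + c (x - 1) = 2 cos (r π / n) c x`, which makes the sum of
`c` over a period vanish unless `cos (r π / n) = 1`.
-/

section CyclicSums

/-- The reflection `x ↦ -1 - x` of `ZMod (2 * n)` has `{0, …, n - 1}` as a fundamental domain. -/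
lemma sum_zmod_two_mul {M : Type*} [AddCommMonoid M] {n : ℕ} [NeZero n] (f : ZMod (2 * n) → M) :
    ∑ x, f x = ∑ i : Fin n, (f (i : ℕ) + f (-1 - (i : ℕ))) := by
  let fold (s : Fin n ⊕ Fin n) : ZMod (2 * n) :=
    (s.elim (fun i : Fin n ↦ (i : ℤ)) (fun i : Fin n ↦ -1 - (i : ℤ)) : ℤ)
  have fold_injective : Function.Injective fold := by
    intro s t hst
    have habs := Int.eq_zero_of_abs_lt_dvd ((ZMod.intCast_eq_intCast_iff_dvd_sub _ _ _).1 hst)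
    rcases s with i | i <;> rcases t with j | j <;>
      simp only [Sum.elim_inl, Sum.elim_inr, abs_lt, Sum.inl.injEq, Sum.inr.injEq, Fin.ext_iff,
        reduceCtorEq] at habs ⊢ <;> omega
  have fold_bijective : Function.Bijective fold := by
    refine (Fintype.bijective_iff_injective_and_card fold).2 ⟨fold_injective, ?_⟩
    rw [Fintype.card_sum, Fintype.card_fin, ZMod.card, two_mul]
  rw [← fold_bijective.sum_comp, Fintype.sum_sum_type, ← Finset.sum_add_distrib]
  simp [fold]

lemma sum_smul_sub_of_even {G K M : Type*} [AddCommGroup G] [Fintype G] [Semifield K]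
    [NeZero (2 : K)] [AddCommMonoid M] [Module K M] {A : G → M} {c e : G → K}
    (hA : Function.Even A) {y : G} (hc : ∀ x, c (y + x) + c (y - x) = 2 * e x * c y) :
    ∑ x, c x • A (x - y) = c y • ∑ x, e x • A x := by
  have shift : ∑ x, c x • A (x - y) = ∑ x, c (y + x) • A x := by
    rw [← Equiv.sum_comp (Equiv.addLeft y)]
    simp
  have reflect : ∑ x, c (y + x) • A x = ∑ x, c (y - x) • A x := by
    rw [← Equiv.sum_comp (Equiv.neg G)]
    simp only [Equiv.neg_apply, hA.eq, sub_eq_add_neg]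
  refine MulAction.injective₀ (two_ne_zero (α := K)) ?_
  calc (2 : K) • ∑ x, c x • A (x - y)
      = ∑ x, (c (y + x) + c (y - x)) • A x := by
        simp only [add_smul, Finset.sum_add_distrib, ← reflect, shift, two_smul]
    _ = (2 : K) • c y • ∑ x, e x • A x := by
        simp only [hc, Finset.smul_sum, smul_smul]
        exact Finset.sum_congr rfl fun x _ ↦ by congr 1; ring

end CyclicSums

section EvenExtension

variable {β : Type*} {n : ℕ}

/-- The even `2n`-periodic extension of a vector indexed by `0, …, n - 1`, with value `0` at `n`.
It is the symbol of the circulant matrix that folds to the Toeplitz-plus-Hankel matrix. -/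
def evenExtension [Zero β] (a : Fin n → β) (x : ZMod (2 * n)) : β :=
  if h : x.valMinAbs.natAbs < n then a ⟨x.valMinAbs.natAbs, h⟩ else 0

lemma evenExtension_even [Zero β] (a : Fin n → β) : Function.Even (evenExtension a) := fun x ↦ by
  simp only [evenExtension, ZMod.natAbs_valMinAbs_neg]

lemma evenExtension_intCast [Zero β] (a : Fin n → β) {z : ℤ} (hz : z.natAbs ≤ n) :
    evenExtension a (z : ZMod (2 * n)) = if h : z.natAbs < n then a ⟨z.natAbs, h⟩ else 0 := by
  have hval : (z : ZMod (2 * n)).valMinAbs.natAbs = z.natAbs := by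
    obtain ⟨m, rfl | rfl⟩ := z.eq_nat_or_neg <;>
      simp only [Int.natAbs_neg, Int.natAbs_natCast] at hz <;>
      simp [ZMod.natAbs_valMinAbs_neg,
        ZMod.valMinAbs_natCast_of_le_half (show m ≤ 2 * n / 2 by omega)]
  simp only [evenExtension, hval]

lemma thSelect_eq_evenExtension [AddCommMonoid β] (a : Fin n → β) (i j : Fin n) :
    thSelect a i j =
      evenExtension a ((i : ℕ) - (j : ℕ)) + evenExtension a ((i : ℕ) + (j : ℕ) + 1) := by
  have toeplitz : ((i : ℕ) - (j : ℕ) : ZMod (2 * n)) = ((i - j : ℤ) : ZMod (2 * n)) := by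
    push_cast
    rfl
  have hankel : ((i : ℕ) + (j : ℕ) + 1 : ZMod (2 * n)) = ((i + j + 1 : ℤ) : ZMod (2 * n)) := by
    push_cast
    rfl
  have hankel_wrap :
      ((i + j + 1 : ℤ) : ZMod (2 * n)) = ((i + j + 1 - (2 * n : ℕ) : ℤ) : ZMod (2 * n)) := by
    rw [Int.cast_sub, Int.cast_natCast, ZMod.natCast_self, sub_zero]
  rw [thSelect, toeplitz, hankel]
  congr 1
  · rw [evenExtension_intCast a (z := i - j) (by omega), dif_pos (by omega)]
  split_ifs
  · rw [evenExtension_intCast a (z := i + j + 1) (by omega), dif_pos (by omega)]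
    congr 2
  · rw [evenExtension_intCast a (z := i + j + 1) (by omega), dif_neg (by omega)]
  · rw [hankel_wrap, evenExtension_intCast a (z := i + j + 1 - (2 * n : ℕ)) (by omega),
      dif_pos (by omega)]
    congr 2
    omega

end EvenExtension

section DctCosine

/-- The cosine `x ↦ cos (r (2x + 1) π / (2n))` sampled by the `r`-th row of `dctMatrix n`, as a
function of `x` modulo `2n`. -/
def dctCos (n : ℕ) (r : ℤ) (x : ZMod (2 * n)) : ℝ :=
  Real.cos (r * (2 * x.valMinAbs + 1) * Real.pi / (2 * n))

variable {n : ℕ}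

lemma dctCos_mul_dctCos (r s : ℤ) (x : ZMod (2 * n)) :
    dctCos n r x * dctCos n s x = (dctCos n (r - s) x + dctCos n (r + s) x) / 2 := by
  rw [eq_div_iff two_ne_zero, mul_comm, ← mul_assoc]
  simp only [dctCos, Real.two_mul_cos_mul_cos]
  congr 2 <;> push_cast <;> ring

lemma sum_dctCos_zero : ∑ i : Fin n, dctCos n 0 (i : ℕ) = n := by
  simp [dctCos]

variable [NeZero n]

lemma dctCos_intCast (r m : ℤ) :
    dctCos n r m = Real.cos (r * (2 * m + 1) * Real.pi / (2 * n)) := by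
  have hn : (n : ℝ) ≠ 0 := NeZero.ne _
  obtain ⟨q, hq⟩ : ((2 * n : ℕ) : ℤ) ∣ m - (m : ZMod (2 * n)).valMinAbs := by
    rw [← ZMod.intCast_eq_intCast_iff_dvd_sub, ZMod.coe_valMinAbs]
  have hm : (m : ℝ) = (m : ZMod (2 * n)).valMinAbs + 2 * n * q := by
    exact_mod_cast sub_eq_iff_eq_add'.1 hq
  rw [dctCos, hm, ← Real.cos_add_int_mul_two_pi _ (r * q)]
  congr 1
  push_cast
  field_simp
  ring

lemma dctCos_natCast (r : ℤ) (m : ℕ) :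
    dctCos n r m = Real.cos (r * (2 * m + 1) * Real.pi / (2 * n)) := by
  exact_mod_cast dctCos_intCast r m

lemma dctCos_neg_one_sub (r : ℤ) (x : ZMod (2 * n)) : dctCos n r (-1 - x) = dctCos n r x := by
  have hx : -1 - x = ((-1 - x.valMinAbs : ℤ) : ZMod (2 * n)) := by simp
  rw [hx, dctCos_intCast, dctCos, ← Real.cos_neg]
  congr 1
  push_cast
  ring

lemma dctCos_add_add_dctCos_sub (r : ℤ) (y x : ZMod (2 * n)) :
    dctCos n r (y + x) + dctCos n r (y - x) =
      2 * Real.cos (r * x.valMinAbs * Real.pi / n) * dctCos n r y := by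
  have hn : (n : ℝ) ≠ 0 := NeZero.ne _
  have hadd : y + x = ((y.valMinAbs + x.valMinAbs : ℤ) : ZMod (2 * n)) := by simp
  have hsub : y - x = ((y.valMinAbs - x.valMinAbs : ℤ) : ZMod (2 * n)) := by simp
  rw [hadd, hsub, dctCos_intCast, dctCos_intCast, dctCos, mul_right_comm (2 : ℝ),
    Real.two_mul_cos_mul_cos, add_comm]
  congr 2 <;> push_cast <;> field_simp <;> ring

lemma sum_dctCos_eq_zero {r : ℤ} (hr : r ≠ 0) (hrn : |r| < 2 * n) :
    ∑ i : Fin n, dctCos n r (i : ℕ) = 0 := by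
  have hn : (n : ℝ) ≠ 0 := NeZero.ne _
  have hcos : Real.cos (r * (1 : ZMod (2 * n)).valMinAbs * Real.pi / n) ≠ 1 := by
    have hone : (1 : ZMod (2 * n)).valMinAbs = 1 := by
      have := NeZero.pos n
      exact_mod_cast ZMod.valMinAbs_natCast_of_le_half (n := 2 * n) (a := 1) (by omega)
    rw [hone, Int.cast_one, mul_one, Ne, Real.cos_eq_one_iff]
    rintro ⟨k, hk⟩
    have hdvd : r = 2 * n * k := by
      have : (r : ℝ) = 2 * n * k := by
        field_simp at hk
        linarith
      exact_mod_cast this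
    exact hr (Int.eq_zero_of_abs_lt_dvd ⟨k, hdvd⟩ hrn)
  have hperiod : ∑ x, dctCos n r x = 2 * ∑ i : Fin n, dctCos n r (i : ℕ) := by
    simp only [sum_zmod_two_mul, dctCos_neg_one_sub, ← two_mul, Finset.mul_sum]
  -- Summing `dctCos_add_add_dctCos_sub` over `y` makes the full-period sum a fixed point of
  -- multiplication by `cos (r π / n)`.
  have hfixed := Finset.sum_congr rfl fun y (_ : y ∈ Finset.univ) ↦
    dctCos_add_add_dctCos_sub (n := n) r y 1
  have hadd : ∑ x, dctCos n r (x + 1) = ∑ x, dctCos n r x :=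
    Equiv.sum_comp (Equiv.addRight 1) _
  have hsub : ∑ x, dctCos n r (x - 1) = ∑ x, dctCos n r x :=
    Equiv.sum_comp (Equiv.subRight 1) _
  rw [Finset.sum_add_distrib, ← Finset.mul_sum, hadd, hsub, hperiod] at hfixed
  refine (mul_eq_zero.1 ?_).resolve_left (sub_ne_zero.2 hcos)
  linear_combination -hfixed / 4

end DctCosine

section DctMatrix

/-- The factor `√((2 - δ_{p,0}) / n)` that normalizes row `p` of `dctMatrix n`. -/
def dctScale (n p : ℕ) : ℝ :=
  Real.sqrt ((2 - if p = 0 then (1 : ℝ) else 0) / n)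

lemma dctScale_sq (n p : ℕ) : dctScale n p ^ 2 = (2 - if p = 0 then (1 : ℝ) else 0) / n :=
  Real.sq_sqrt (div_nonneg (by split_ifs <;> norm_num) n.cast_nonneg)

variable {n : ℕ} [NeZero n]

lemma dctMatrix_apply (p j : Fin n) :
    dctMatrix n p j = dctScale n p * dctCos n (p : ℕ) (j : ℕ) := by
  rw [dctCos_natCast]
  rfl

lemma dctMatrix_mul_transpose : dctMatrix n * (dctMatrix n)ᵀ = 1 := by
  have hn : (n : ℝ) ≠ 0 := NeZero.ne _
  ext p q
  have hentry : (dctMatrix n * (dctMatrix n)ᵀ) p q = dctScale n p * dctScale n q / 2 *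
      (∑ j : Fin n, dctCos n ((p : ℕ) - (q : ℕ)) (j : ℕ) +
        ∑ j : Fin n, dctCos n ((p : ℕ) + (q : ℕ)) (j : ℕ)) := by
    rw [Matrix.mul_apply, ← Finset.sum_add_distrib, Finset.mul_sum]
    refine Finset.sum_congr rfl fun j _ ↦ ?_
    rw [Matrix.transpose_apply, dctMatrix_apply, dctMatrix_apply, mul_mul_mul_comm,
      dctCos_mul_dctCos]
    ring
  rw [hentry]
  rcases eq_or_ne p q with rfl | hpq
  · rw [sub_self, sum_dctCos_zero, ← sq, dctScale_sq, Matrix.one_apply_eq]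
    rcases eq_or_ne (p : ℕ) 0 with hp | hp
    · simp only [hp, Nat.cast_zero, add_zero, sum_dctCos_zero, if_true]
      field_simp
      norm_num
    · rw [sum_dctCos_eq_zero (by omega) (by rw [abs_lt]; omega), if_neg hp]
      field_simp
      norm_num
  · have hpq' : (p : ℕ) ≠ q := Fin.val_ne_of_ne hpq
    rw [sum_dctCos_eq_zero (by omega) (by rw [abs_lt]; omega),
      sum_dctCos_eq_zero (by omega) (by rw [abs_lt]; omega), Matrix.one_apply_ne hpq]
    simp

lemma dctMatrix_zero_right_pos (p : Fin n) : 0 < dctMatrix n p 0 := by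
  have hn : (0 : ℝ) < n := Nat.cast_pos.2 (NeZero.pos n)
  have hp : (p : ℝ) < n := Nat.cast_lt.2 p.isLt
  refine mul_pos (Real.sqrt_pos.2 (div_pos (by split_ifs <;> norm_num) hn))
    (Real.cos_pos_of_mem_Ioo ⟨?_, ?_⟩)
  · exact (neg_neg_of_pos Real.pi_div_two_pos).trans_le (by positivity)
  · simp only [Fin.val_zero, Nat.cast_zero, mul_zero, zero_add, mul_one]
    rw [div_lt_div_iff₀ (by positivity) two_pos]
    nlinarith [Real.pi_pos]

lemma Wmat_inv : (Wmat n)⁻¹ = Matrix.diagonal fun p ↦ (dctMatrix n p 0)⁻¹ := by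
  refine Matrix.inv_eq_right_inv ?_
  rw [Wmat, Matrix.diagonal_mul_diagonal, ← Matrix.diagonal_one]
  exact congrArg _ (funext fun p ↦ mul_inv_cancel₀ (dctMatrix_zero_right_pos p).ne')

end DctMatrix

section Diagonalization

variable {n : ℕ} [NeZero n]

/-- The eigenvalue of `tph a` for the `r`-th row of `dctMatrix n`: the cosine transform of the even
`2n`-periodic extension of `a`. -/
def tphEigenvalue {M : Type*} [AddCommMonoid M] [Module ℝ M] (a : Fin n → M) (r : ℤ) : M :=
  ∑ x : ZMod (2 * n), Real.cos (r * x.valMinAbs * Real.pi / n) • evenExtension a x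

lemma sum_dctCos_smul_thSelect {M : Type*} [AddCommMonoid M] [Module ℝ M]
    (a : Fin n → M) (r : ℤ) (j : Fin n) :
    ∑ i : Fin n, dctCos n r (i : ℕ) • thSelect a i j =
      dctCos n r (j : ℕ) • tphEigenvalue a r := by
  rw [tphEigenvalue, ← sum_smul_sub_of_even (evenExtension_even a)
    (dctCos_add_add_dctCos_sub r (j : ℕ)), sum_zmod_two_mul]
  refine Finset.sum_congr rfl fun i _ ↦ ?_
  rw [thSelect_eq_evenExtension, smul_add, dctCos_neg_one_sub, ← (evenExtension_even a).eq (_ + 1)]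
  congr 3
  ring

variable {R : Type*} [Semiring R] [Algebra ℝ R]

lemma dctMatrix_mul_thSelect (a : Fin n → R) :
    (dctMatrix n).map (algebraMap ℝ R) * Matrix.of (thSelect a) =
      Matrix.diagonal (fun p : Fin n ↦ tphEigenvalue a (p : ℕ)) *
        (dctMatrix n).map (algebraMap ℝ R) := by
  ext p j
  rw [Matrix.diagonal_mul]
  simp only [Matrix.mul_apply, Matrix.map_apply, Matrix.of_apply,
    ← Algebra.commutes, ← Algebra.smul_def, dctMatrix_apply, mul_smul, ← Finset.smul_sum,
    sum_dctCos_smul_thSelect]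

lemma one_add_Zmat_mulVec (a : Fin n → R) :
    (1 + Zmat n).map (algebraMap ℝ R) *ᵥ a = (Matrix.of (thSelect a)).col 0 := by
  ext i
  have hshift : ((Zmat n).map (algebraMap ℝ R) *ᵥ a) i =
      if h : (i : ℕ) + 1 < n then a ⟨i + 1, h⟩ else 0 := by
    simp only [Matrix.mulVec, dotProduct, Zmat, Matrix.map_apply, Matrix.of_apply,
      apply_ite (algebraMap ℝ R), map_one, map_zero, ite_mul, one_mul, zero_mul]
    split_ifs with h
    · rw [Finset.sum_eq_single ⟨i + 1, h⟩] <;> simp +contextual [Fin.ext_iff, eq_comm]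
    · exact Finset.sum_eq_zero fun j _ ↦ if_neg (by omega)
  rw [Matrix.map_add _ (map_add _), Matrix.map_one _ (map_zero _) (map_one _), Matrix.add_mulVec,
    Matrix.one_mulVec, Pi.add_apply, hshift, Matrix.col_apply, Matrix.of_apply, thSelect]
  congr 1
  simp only [Fin.val_zero, add_zero]
  split_ifs <;> first | rfl | omega

lemma Mmat_mulVec (a : Fin n → R) :
    (Mmat n).map (algebraMap ℝ R) *ᵥ a = fun p : Fin n ↦ tphEigenvalue a (p : ℕ) := by
  have hcol : (dctMatrix n).map (algebraMap ℝ R) *ᵥ (Matrix.of (thSelect a)).col 0 =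
      fun p : Fin n ↦ tphEigenvalue a (p : ℕ) * algebraMap ℝ R (dctMatrix n p 0) := by
    ext p
    have h := congrFun (congrFun (dctMatrix_mul_thSelect a) p) 0
    rwa [Matrix.diagonal_mul] at h
  ext p
  rw [Mmat, Matrix.map_mul, Matrix.map_mul, ← Matrix.mulVec_mulVec, ← Matrix.mulVec_mulVec,
    one_add_Zmat_mulVec, hcol, Wmat_inv, Matrix.diagonal_map (map_zero _), Matrix.mulVec_diagonal,
    ← Algebra.commutes, ← mul_assoc, ← map_mul,
    inv_mul_cancel₀ (dctMatrix_zero_right_pos p).ne', map_one, one_mul]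

theorem dct_diagonalizes_tph_general (a : Fin n → R) :
    (dctMatrix n).map (algebraMap ℝ R) * Matrix.of (thSelect a) *
        ((dctMatrix n).map (algebraMap ℝ R))ᵀ =
      Matrix.diagonal ((Mmat n).map (algebraMap ℝ R) *ᵥ a) := by
  rw [dctMatrix_mul_thSelect, ← Mmat_mulVec, Matrix.mul_assoc, ← Matrix.transpose_map,
    ← Matrix.map_mul, dctMatrix_mul_transpose, Matrix.map_one _ (map_zero _) (map_one _),
    Matrix.mul_one]

end Diagonalization

/-- For every `n ≥ 1` and `a ∈ ℂ^n`:  `C_n · tph(a) · C_nᵀ = diag(M_n a)`. -/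
theorem dct_diagonalizes_tph (n : ℕ) (hn : 1 ≤ n) (a : Fin n → ℂ) :
    (dctMatrix n).map (Complex.ofReal) * tph a * ((dctMatrix n).map (Complex.ofReal))ᵀ
      = Matrix.diagonal ((Mmat n).map (Complex.ofReal) *ᵥ a) :=
  have : NeZero n := NeZero.of_pos hn
  dct_diagonalizes_tph_general a
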